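/- arXiv:1605.02237 — 4 statements merged into one kernel-verified Lean document; each statement's English description precedes it below -/
import Mathlib

section
/- Let E be a real Banach space and let j : E → E* satisfy, for every x ∈ E, j(x)(x) = ‖x‖² and ‖j(x)‖ = ‖x‖. Then the following three statements are equivalent: (i) there exists c > 0 such that for all τ > 0 and all u, v ∈ E with ‖u‖ = ‖v‖ = 1, (‖u + τ·v‖ + ‖u − τ·v‖)/2 − 1 ≤ c·τ² (i.e., the modulus of smoothness satisfies ρ_E(τ) ≤ cτ², so E is 2-uniformly smooth); (ii) there exists d > 0 such that for all x, y ∈ E, ‖x + y‖² ≤ ‖x‖² + 2·j(x)(y) + d·‖y‖²; (iii) there exists d > 0 such that for all x ∈ E, all t > 0 and all v ∈ E with ‖v‖ = 1, (‖x + t·v‖² − ‖x‖²)/t − 2·j(x)(v) ≤ d·t. -/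
/-!
Evaluating the functional `j x`, of norm `‖x‖`, at `x - y` gives `‖x‖ * ‖x - y‖ ≥ ‖x‖² - j x y`.
Smoothness bounds `‖x + y‖ + ‖x - y‖` from above by `2‖x‖ + 2c‖y‖²/‖x‖`, so together
`‖x‖ * ‖x + y‖ ≤ ‖x‖² + j x y + 2c‖y‖²`. Squaring this when `‖y‖ ≤ ‖x‖`, and using only the triangle
inequality when `‖x‖ < ‖y‖`, yields the quadratic bound with `d = 5 + 8c + 4c²`. Conversely, the
quadratic bound for `y = ± τ • v` is averaged, the linear terms cancel, and `a ≤ (a² + 1) / 2`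
removes the squares. The difference-quotient form is the quadratic bound with `y = t • v`.
-/

/-- The smoothness estimate freed of its normalization, with denominators cleared. -/
lemma smooth_homogeneous {E : Type*} [NormedAddCommGroup E] [NormedSpace ℝ E] {c : ℝ}
    (h : ∀ τ > (0 : ℝ), ∀ u v : E, ‖u‖ = 1 → ‖v‖ = 1 →
      (‖u + τ • v‖ + ‖u - τ • v‖) / 2 - 1 ≤ c * τ ^ 2)
    {x y : E} (hx : 0 < ‖x‖) (hy : 0 < ‖y‖) :
    ‖x‖ * (‖x + y‖ + ‖x - y‖) ≤ 2 * ‖x‖ ^ 2 + 2 * c * ‖y‖ ^ 2 := by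
  have hx' : x ≠ 0 := norm_pos_iff.mp hx
  have hy' : y ≠ 0 := norm_pos_iff.mp hy
  have key := h (‖y‖ / ‖x‖) (div_pos hy hx) (‖x‖⁻¹ • x) (‖y‖⁻¹ • y)
    (norm_smul_inv_norm (𝕜 := ℝ) hx') (norm_smul_inv_norm (𝕜 := ℝ) hy')
  have e : (‖y‖ / ‖x‖) • (‖y‖⁻¹ • y) = ‖x‖⁻¹ • y := by
    rw [smul_smul]
    congr 1
    field_simp
  rw [e, ← smul_add, ← smul_sub, norm_smul, norm_smul, norm_inv, norm_norm] at key
  have key2 := mul_le_mul_of_nonneg_left key (by positivity : 0 ≤ 2 * ‖x‖ ^ 2)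
  have e1 : 2 * ‖x‖ ^ 2 * ((‖x‖⁻¹ * ‖x + y‖ + ‖x‖⁻¹ * ‖x - y‖) / 2 - 1)
      = ‖x‖ * (‖x + y‖ + ‖x - y‖) - 2 * ‖x‖ ^ 2 := by
    field_simp
  have e2 : 2 * ‖x‖ ^ 2 * (c * (‖y‖ / ‖x‖) ^ 2) = 2 * c * ‖y‖ ^ 2 := by
    field_simp
  linarith

/-- The real-number inequality behind squaring `r * N ≤ r² + p + 2cs²`, where `r = ‖x‖`, `s = ‖y‖`,
`N = ‖x + y‖` and `p = j x y`. -/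
lemma square_bound {r s p c N : ℝ} (hr : 0 < r) (hs : 0 ≤ s) (hc : 0 < c) (hN : 0 ≤ N)
    (hsr : s ≤ r) (hp : |p| ≤ r * s) (h : r * N ≤ r ^ 2 + p + 2 * c * s ^ 2) :
    N ^ 2 ≤ r ^ 2 + 2 * p + (5 + 8 * c + 4 * c ^ 2) * s ^ 2 := by
  have h1 : (r * N) ^ 2 ≤ (r ^ 2 + p + 2 * c * s ^ 2) ^ 2 :=
    pow_le_pow_left₀ (by positivity) h 2
  have hp2 : p ^ 2 ≤ r ^ 2 * s ^ 2 := by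
    rw [← mul_pow]
    exact sq_le_sq' (abs_le.mp hp).1 (abs_le.mp hp).2
  have hss : s ^ 2 ≤ r ^ 2 := pow_le_pow_left₀ hs hsr 2
  have hpr : p ≤ r ^ 2 := by nlinarith [(abs_le.mp hp).2]
  have h2 : c * s ^ 2 * p ≤ c * s ^ 2 * r ^ 2 := mul_le_mul_of_nonneg_left hpr (by positivity)
  have h3 : c ^ 2 * s ^ 2 * s ^ 2 ≤ c ^ 2 * s ^ 2 * r ^ 2 :=
    mul_le_mul_of_nonneg_left hss (by positivity)
  have h4 : 0 ≤ r ^ 2 * s ^ 2 := by positivity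
  have h5 : r ^ 2 * N ^ 2 ≤ r ^ 2 * (r ^ 2 + 2 * p + (5 + 8 * c + 4 * c ^ 2) * s ^ 2) := by
    linarith
  exact le_of_mul_le_mul_left h5 (by positivity)

theorem stmt_0 {E : Type*} [NormedAddCommGroup E] [NormedSpace ℝ E] [CompleteSpace E]
    (j : E → (E →L[ℝ] ℝ))
    (hj1 : ∀ x : E, j x x = ‖x‖ ^ 2) (hj2 : ∀ x : E, ‖j x‖ = ‖x‖) :
    List.TFAE
      [ ∃ c > (0 : ℝ), ∀ τ > (0 : ℝ), ∀ u v : E, ‖u‖ = 1 → ‖v‖ = 1 →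
          (‖u + τ • v‖ + ‖u - τ • v‖) / 2 - 1 ≤ c * τ ^ 2,
        ∃ d > (0 : ℝ), ∀ x y : E,
          ‖x + y‖ ^ 2 ≤ ‖x‖ ^ 2 + 2 * j x y + d * ‖y‖ ^ 2,
        ∃ d > (0 : ℝ), ∀ x : E, ∀ t > (0 : ℝ), ∀ v : E, ‖v‖ = 1 →
          (‖x + t • v‖ ^ 2 - ‖x‖ ^ 2) / t - 2 * j x v ≤ d * t ] := by
  have hb : ∀ x z : E, |j x z| ≤ ‖x‖ * ‖z‖ := fun x z => by
    rw [← Real.norm_eq_abs, ← hj2 x]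
    exact (j x).le_opNorm z
  tfae_have 1 → 2 := by
    rintro ⟨c, hc, h⟩
    refine ⟨5 + 8 * c + 4 * c ^ 2, by positivity, fun x y => ?_⟩
    rcases eq_or_ne y 0 with rfl | hy
    · simp
    have hs : 0 < ‖y‖ := norm_pos_iff.mpr hy
    have hp := hb x y
    rcases le_or_gt ‖y‖ ‖x‖ with hsr | hsr
    · have hr : 0 < ‖x‖ := hs.trans_le hsr
      refine square_bound hr hs.le hc (norm_nonneg _) hsr hp ?_
      have h1 := smooth_homogeneous h hr hs
      have h2 := (le_abs_self _).trans (hb x (x - y))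
      rw [map_sub, hj1] at h2
      linarith
    · have h1 : ‖x + y‖ ^ 2 ≤ (‖x‖ + ‖y‖) ^ 2 :=
        pow_le_pow_left₀ (norm_nonneg _) (norm_add_le x y) 2
      have h2 : ‖x‖ * ‖y‖ ≤ ‖y‖ ^ 2 := by nlinarith
      have h3 : 0 ≤ (8 * c + 4 * c ^ 2) * ‖y‖ ^ 2 := by positivity
      linarith [(abs_le.mp hp).1]
  tfae_have 2 → 1 := by
    rintro ⟨d, hd, h⟩
    refine ⟨d / 2, by positivity, fun τ hτ u v hu hv => ?_⟩
    have h1 := h u (τ • v)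
    have h2 := h u (-(τ • v))
    rw [← sub_eq_add_neg, map_neg, norm_neg] at h2
    rw [norm_smul, hv, hu, mul_one, Real.norm_eq_abs, sq_abs] at h1 h2
    nlinarith [sq_nonneg (‖u + τ • v‖ - 1), sq_nonneg (‖u - τ • v‖ - 1)]
  tfae_have 2 → 3 := by
    rintro ⟨d, hd, h⟩
    refine ⟨d, hd, fun x t ht v hv => ?_⟩
    have h1 := h x (t • v)
    rw [norm_smul, hv, mul_one, Real.norm_eq_abs, sq_abs, map_smul, smul_eq_mul] at h1
    rw [sub_le_iff_le_add, div_le_iff₀ ht]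
    linarith
  tfae_have 3 → 2 := by
    rintro ⟨d, hd, h⟩
    refine ⟨d, hd, fun x y => ?_⟩
    rcases eq_or_ne y 0 with rfl | hy
    · simp
    have hs : 0 < ‖y‖ := norm_pos_iff.mpr hy
    have h1 := h x ‖y‖ hs (‖y‖⁻¹ • y) (norm_smul_inv_norm (𝕜 := ℝ) hy)
    rw [smul_inv_smul₀ hs.ne', map_smul, smul_eq_mul, sub_le_iff_le_add, div_le_iff₀ hs] at h1
    have e : (d * ‖y‖ + 2 * (‖y‖⁻¹ * j x y)) * ‖y‖ = d * ‖y‖ ^ 2 + 2 * j x y := by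
      field_simp
    linarith
  tfae_finish
end

section
/- Let E be a real Banach space, C ⊆ E a convex subset, and let j : E → E* satisfy, for every x ∈ E, j(x)(x) = ‖x‖² and ‖j(x)‖ = ‖x‖. Let d ≥ 1 be such that for all x, y ∈ E, ‖x + y‖² ≤ ‖x‖² + 2·j(x)(y) + d·‖y‖². Let k ∈ (0,1) and let T : C → C be a k-strict pseudocontraction with respect to j. Then for every t ∈ (0, (1−k)/d], the map T_t defined by T_t x = t·T x + (1−t)·x is nonexpansive, i.e., for all x, y ∈ C, ‖T_t x − T_t y‖ ≤ ‖x − y‖. -/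
/-!
Write `u = x - y` and `w = (x - T x) - (y - T y)`. The difference of the averaged maps is
`u + (-t) • w`, so the smoothness inequality followed by strict pseudocontractivity gives
`‖u + (-t) • w‖² ≤ ‖u‖² - 2 t j(u)(w) + d t² ‖w‖² ≤ ‖u‖² - t ((1 - k) - t d) ‖w‖²`,
and `(1 - k) - t d ≥ 0` by the choice of `t`.
-/

theorem stmt_4 {E : Type*} [NormedAddCommGroup E] [NormedSpace ℝ E] [CompleteSpace E]
    (C : Set E) (hC : Convex ℝ C)
    (j : E → (E →L[ℝ] ℝ))
    (hj1 : ∀ x : E, j x x = ‖x‖ ^ 2) (hj2 : ∀ x : E, ‖j x‖ = ‖x‖)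
    (d : ℝ) (hd : 1 ≤ d)
    (hsmooth : ∀ x y : E, ‖x + y‖ ^ 2 ≤ ‖x‖ ^ 2 + 2 * j x y + d * ‖y‖ ^ 2)
    (k : ℝ) (hk0 : 0 < k) (hk1 : k < 1)
    (T : E → E) (hTC : ∀ x ∈ C, T x ∈ C)
    (hT : ∀ x ∈ C, ∀ y ∈ C,
      ((1 - k) / 2) * ‖(x - T x) - (y - T y)‖ ^ 2 ≤ j (x - y) ((x - T x) - (y - T y)))
    (t : ℝ) (ht0 : 0 < t) (ht1 : t ≤ (1 - k) / d) :
    ∀ x ∈ C, ∀ y ∈ C,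
      ‖(t • T x + (1 - t) • x) - (t • T y + (1 - t) • y)‖ ≤ ‖x - y‖ := by
  intro x hx y hy
  have hdiff : (t • T x + (1 - t) • x) - (t • T y + (1 - t) • y)
      = (x - y) + (-t) • ((x - T x) - (y - T y)) := by module
  have hw := hT x hx y hy
  rw [hdiff]
  generalize (x - T x) - (y - T y) = w at hw ⊢
  have hs := hsmooth (x - y) ((-t) • w)
  rw [map_smul, norm_smul, smul_eq_mul, Real.norm_eq_abs, mul_pow, sq_abs] at hs
  have htd : t * d ≤ 1 - k := (le_div_iff₀ (by linarith)).1 ht1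
  have hgain : 0 ≤ t * ((1 - k) - t * d) * ‖w‖ ^ 2 :=
    mul_nonneg (mul_nonneg ht0.le (by linarith)) (sq_nonneg _)
  have hmul := mul_le_mul_of_nonneg_left hw ht0.le
  refine (sq_le_sq₀ (norm_nonneg _) (norm_nonneg _)).1 ?_
  linarith
end

section
/- Let E be a real Banach space and c > 0 such that for all τ > 0 and all u, v ∈ E with ‖u‖ = ‖v‖ = 1, (‖u + τ·v‖ + ‖u − τ·v‖)/2 − 1 ≤ c·τ² (i.e., ρ_E(τ) ≤ cτ²). Then the modulus of convexity of the dual space E* satisfies δ_{E*}(ε) ≥ ε²/(16c) for all ε ∈ [0,2]; concretely, for all f, g ∈ E* with ‖f‖ = ‖g‖ = 1 and ‖f − g‖ ≥ ε, one has 1 − ‖f + g‖/2 ≥ ε²/(16c). -/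
/-!
For unit vectors `u`, `v` and `τ > 0`,
`(f + g) u + τ (f - g) v = f (u + τ v) + g (u - τ v) ≤ ‖u + τ v‖ + ‖u - τ v‖ ≤ 2 + 2 c τ²`.
Taking suprema over `u` and `v` gives `‖f + g‖ + τ ‖f - g‖ ≤ 2 + 2 c τ²`, which is the easy half of
Lindenstrauss's duality formula; the choice `τ = ε / (4 c)` is optimal and gives the bound.
-/

/-- The dual norm is the supremum of the values (without absolute values) on the unit sphere. A unit
vector is required because that supremum is empty in the trivial space. -/
lemma opNorm_le_of_apply_le {E : Type*} [NormedAddCommGroup E] [NormedSpace ℝ E]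
    {w : E} (hw : ‖w‖ = 1) (φ : E →L[ℝ] ℝ) (M : ℝ)
    (h : ∀ u : E, ‖u‖ = 1 → φ u ≤ M) : ‖φ‖ ≤ M := by
  have key : ∀ u : E, ‖u‖ = 1 → ‖φ u‖ ≤ M := fun u hu => by
    have h2 := h (-u) (by rwa [norm_neg])
    rw [map_neg] at h2
    exact abs_le.2 ⟨by linarith, h u hu⟩
  exact ContinuousLinearMap.opNorm_le_of_unit_norm ((norm_nonneg _).trans (key w hw)) key

theorem stmt_13 {E : Type*} [NormedAddCommGroup E] [NormedSpace ℝ E] [CompleteSpace E]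
    (c : ℝ) (hc : 0 < c)
    (hρ : ∀ τ > (0 : ℝ), ∀ u v : E, ‖u‖ = 1 → ‖v‖ = 1 →
      (‖u + τ • v‖ + ‖u - τ • v‖) / 2 - 1 ≤ c * τ ^ 2) :
    ∀ ε : ℝ, 0 ≤ ε → ε ≤ 2 → ∀ f g : E →L[ℝ] ℝ, ‖f‖ = 1 → ‖g‖ = 1 →
      ε ≤ ‖f - g‖ → ε ^ 2 / (16 * c) ≤ 1 - ‖f + g‖ / 2 := by
  intro ε hε0 _ f g hf hg hfg
  rcases hε0.eq_or_lt with rfl | hε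
  · have := norm_add_le f g
    rw [hf, hg] at this
    norm_num
    linarith
  obtain ⟨w, hw⟩ : ∃ w : E, ‖w‖ = 1 := by
    have hf0 : f ≠ 0 := by
      rintro rfl
      simp at hf
    obtain ⟨x, hx⟩ := DFunLike.ne_iff.1 hf0
    have hx0 : x ≠ 0 := by
      rintro rfl
      simp at hx
    exact ⟨‖x‖⁻¹ • x, norm_smul_inv_norm (𝕜 := ℝ) hx0⟩
  have key : ∀ τ > (0 : ℝ), ‖f + g‖ + τ * ‖f - g‖ ≤ 2 + 2 * c * τ ^ 2 := by
    intro τ hτ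
    have pointwise : ∀ u v : E, ‖u‖ = 1 → ‖v‖ = 1 →
        (f + g) u + τ * (f - g) v ≤ 2 + 2 * c * τ ^ 2 := by
      intro u v hu hv
      have h1 := (le_abs_self _).trans (f.le_opNorm (u + τ • v))
      have h2 := (le_abs_self _).trans (g.le_opNorm (u - τ • v))
      have h3 := hρ τ hτ u v hu hv
      simp only [hf, hg, one_mul, map_add, map_sub, map_smul, smul_eq_mul] at h1 h2
      simp only [ContinuousLinearMap.add_apply, ContinuousLinearMap.sub_apply]
      linarith
    have h1 : ∀ v : E, ‖v‖ = 1 → ‖f + g‖ ≤ 2 + 2 * c * τ ^ 2 - τ * (f - g) v := fun v hv =>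
      opNorm_le_of_apply_le hw _ _ fun u hu => by linarith [pointwise u v hu hv]
    have h2 : ‖f - g‖ ≤ (2 + 2 * c * τ ^ 2 - ‖f + g‖) / τ :=
      opNorm_le_of_apply_le hw _ _ fun v hv => by
        rw [le_div_iff₀ hτ]
        linarith [h1 v hv]
    rw [le_div_iff₀ hτ] at h2
    linarith
  have hτ : 0 < ε / (4 * c) := by positivity
  have h1 := key _ hτ
  have h2 := mul_le_mul_of_nonneg_left hfg hτ.le
  have e1 : ε / (4 * c) * ε = 4 * (ε ^ 2 / (16 * c)) := by field_simp; norm_num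
  have e2 : 2 * c * (ε / (4 * c)) ^ 2 = 2 * (ε ^ 2 / (16 * c)) := by field_simp; norm_num
  linarith
end

section
/- Let E be a real Banach space, let j : E → E* satisfy, for every x ∈ E, j(x)(x) = ‖x‖² and ‖j(x)‖ = ‖x‖, and let c > 0 be such that for all τ > 0 and all u, v ∈ E with ‖u‖ = ‖v‖ = 1, (‖u + τ·v‖ + ‖u − τ·v‖)/2 − 1 ≤ c·τ² (i.e., E is 2-uniformly smooth with ρ_E(τ) ≤ cτ²). Define d_c := 8 / min(1/(16c), 2 − √2). Then for all x, y ∈ E, ‖x + y‖² ≤ ‖x‖² + 2·j(x)(y) + d_c·‖y‖². -/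
/-!
The inequality already holds with the constant `4 * c + 1` in place of `8 / min …`.
Write `X = ‖x‖`, `Y = ‖y‖`, `N = ‖x + y‖`, `M = ‖x - y‖`. The smoothness bound at `u = x / X`,
`v = y / Y`, `τ = Y / X` scales to `X * (N + M) ≤ 2 * X ^ 2 + 2 * c * Y ^ 2`, and
`X * M ≥ j x (x - y) = X ^ 2 - j x y` because `‖j x‖ = X`. Hence
`X * (N - X) ≤ j x y + 2 * c * Y ^ 2`, and since `|N - X| ≤ Y`,
`N ^ 2 = X ^ 2 + 2 * X * (N - X) + (N - X) ^ 2 ≤ X ^ 2 + 2 * j x y + (4 * c + 1) * Y ^ 2`.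
-/

/-- The modulus-of-smoothness bound for unit vectors, made homogeneous. -/
theorem norm_mul_add_sub_le {E : Type*} [NormedAddCommGroup E] [NormedSpace ℝ E] (c : ℝ)
    (hρ : ∀ τ > (0 : ℝ), ∀ u v : E, ‖u‖ = 1 → ‖v‖ = 1 →
      (‖u + τ • v‖ + ‖u - τ • v‖) / 2 - 1 ≤ c * τ ^ 2)
    {x y : E} (hx : x ≠ 0) (hy : y ≠ 0) :
    ‖x‖ * (‖x + y‖ + ‖x - y‖) ≤ 2 * ‖x‖ ^ 2 + 2 * c * ‖y‖ ^ 2 := by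
  have hX : 0 < ‖x‖ := norm_pos_iff.mpr hx
  have hY : 0 < ‖y‖ := norm_pos_iff.mpr hy
  have h := hρ (‖y‖ / ‖x‖) (div_pos hY hX) (‖x‖⁻¹ • x) (‖y‖⁻¹ • y)
    (by rw [norm_smul, norm_inv, norm_norm, inv_mul_cancel₀ hX.ne'])
    (by rw [norm_smul, norm_inv, norm_norm, inv_mul_cancel₀ hY.ne'])
  have hv : (‖y‖ / ‖x‖) • (‖y‖⁻¹ • y) = ‖x‖⁻¹ • y := by
    rw [smul_smul]
    congr 1
    field_simp
  rw [hv, ← smul_add, ← smul_sub, norm_smul, norm_smul, norm_inv, norm_norm] at h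
  have h2 := mul_le_mul_of_nonneg_left h (by positivity : 0 ≤ 2 * ‖x‖ ^ 2)
  have e1 : 2 * ‖x‖ ^ 2 * ((‖x‖⁻¹ * ‖x + y‖ + ‖x‖⁻¹ * ‖x - y‖) / 2 - 1)
      = ‖x‖ * (‖x + y‖ + ‖x - y‖) - 2 * ‖x‖ ^ 2 := by
    field_simp
  have e2 : 2 * ‖x‖ ^ 2 * (c * (‖y‖ / ‖x‖) ^ 2) = 2 * c * ‖y‖ ^ 2 := by
    field_simp
  linarith

theorem four_mul_add_one_le (c : ℝ) (hc : 0 < c) :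
    4 * c + 1 ≤ 8 / min (1 / (16 * c)) (2 - Real.sqrt 2) := by
  have hs1 : 1 ≤ Real.sqrt 2 := Real.one_le_sqrt.mpr (by norm_num)
  have hs2 : Real.sqrt 2 < 2 := by
    rw [Real.sqrt_lt' (by norm_num)]
    norm_num
  have hm : 0 < min (1 / (16 * c)) (2 - Real.sqrt 2) :=
    lt_min (by positivity) (by linarith)
  have h1 := min_le_left (1 / (16 * c)) (2 - Real.sqrt 2)
  have h2 := min_le_right (1 / (16 * c)) (2 - Real.sqrt 2)
  rw [le_div_iff₀ (by positivity)] at h1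
  rw [le_div_iff₀ hm]
  linarith

theorem stmt_15 {E : Type*} [NormedAddCommGroup E] [NormedSpace ℝ E] [CompleteSpace E]
    (j : E → (E →L[ℝ] ℝ))
    (hj1 : ∀ x : E, j x x = ‖x‖ ^ 2) (hj2 : ∀ x : E, ‖j x‖ = ‖x‖)
    (c : ℝ) (hc : 0 < c)
    (hρ : ∀ τ > (0 : ℝ), ∀ u v : E, ‖u‖ = 1 → ‖v‖ = 1 →
      (‖u + τ • v‖ + ‖u - τ • v‖) / 2 - 1 ≤ c * τ ^ 2) :
    ∀ x y : E, ‖x + y‖ ^ 2 ≤ ‖x‖ ^ 2 + 2 * j x y +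
      (8 / min (1 / (16 * c)) (2 - Real.sqrt 2)) * ‖y‖ ^ 2 := by
  intro x y
  have hd := mul_le_mul_of_nonneg_right (four_mul_add_one_le c hc) (sq_nonneg ‖y‖)
  suffices h : ‖x + y‖ ^ 2 ≤ ‖x‖ ^ 2 + 2 * j x y + (4 * c + 1) * ‖y‖ ^ 2 by linarith
  by_cases hx : x = 0
  · subst hx
    have h0 : j 0 = 0 := norm_eq_zero.mp (by rw [hj2, norm_zero])
    have : 0 ≤ c * ‖y‖ ^ 2 := by positivity
    simp only [h0, zero_add, norm_zero, ContinuousLinearMap.zero_apply]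
    linarith
  by_cases hy : y = 0
  · simp [hy]
  have hsmooth := norm_mul_add_sub_le c hρ hx hy
  have hdual : ‖x‖ ^ 2 - j x y ≤ ‖x‖ * ‖x - y‖ := by
    have h := (le_abs_self _).trans ((j x).le_opNorm (x - y))
    rwa [map_sub, hj1, hj2] at h
  have habs : |‖x + y‖ - ‖x‖| ≤ ‖y‖ := by
    simpa using abs_norm_sub_norm_le (x + y) x
  have hsq : (‖x + y‖ - ‖x‖) ^ 2 ≤ ‖y‖ ^ 2 := sq_le_sq.mpr (by rwa [abs_norm])
  linarith
end
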